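/- arXiv:1412.7840 — 2 statements merged into one kernel-verified Lean document; each statement's English description precedes it below -/
import Mathlib

section
/- Suppose the pair (A,B) is controllable (the controllability matrix [B, AB, …, A^{n-1}B] has rank n) and A is nonsingular. Then the extended value function V̄ defined on ℝⁿ by V̄(ξ) = V(ξ) for ξ ∈ R and V̄(ξ) = T for ξ ∉ R is lower semi-continuous on ℝⁿ, i.e., for every α ∈ ℝ the set {ξ ∈ ℝⁿ : V̄(ξ) > α} is open. -/
open MeasureTheory Set

noncomputable section

/-- Controllability matrix `[B, AB, ..., A^{n-1}B]`. -/
def ctrbMatrix (n : ℕ) (A : Matrix (Fin n) (Fin n) ℝ) (B : Fin n → ℝ) :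
    Matrix (Fin n) (Fin n) ℝ :=
  Matrix.of fun i j => (A ^ (j : ℕ)).mulVec B i

/-- `∫₀ᵀ e^{-As} B u(s) ds`. -/
def stateInt (n : ℕ) (T : ℝ) (A : Matrix (Fin n) (Fin n) ℝ) (B : Fin n → ℝ)
    (u : ℝ → ℝ) : Fin n → ℝ :=
  ∫ s in Icc (0:ℝ) T, u s • (NormedSpace.exp ((-s) • A)).mulVec B

/-- The magnitude constraint `‖u‖_∞ ≤ 1` on `[0,T]`. -/
def MagBdd (T : ℝ) (u : ℝ → ℝ) : Prop := ∀ t ∈ Icc (0:ℝ) T, |u t| ≤ 1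

/-- The `L¹` norm of `u` on `[0,T]`. -/
def L1Norm (T : ℝ) (u : ℝ → ℝ) : ℝ := ∫ t in Icc (0:ℝ) T, |u t|

/-- The `L⁰` norm of `u`: Lebesgue measure of `{t ∈ [0,T] : u t ≠ 0}`. -/
def L0Norm (T : ℝ) (u : ℝ → ℝ) : ℝ := (volume {t ∈ Icc (0:ℝ) T | u t ≠ 0}).toReal

/-- Admissible controls steering `ξ` to `0` at time `T`:
`∫₀ᵀ e^{-As} B u(s) ds = -ξ` and `‖u‖_∞ ≤ 1`. -/
def Admissible (n : ℕ) (T : ℝ) (A : Matrix (Fin n) (Fin n) ℝ) (B : Fin n → ℝ)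
    (ξ : Fin n → ℝ) (u : ℝ → ℝ) : Prop :=
  Measurable u ∧ MagBdd T u ∧ stateInt n T A B u = -ξ

/-- Value function of the maximum hands-off (`L⁰`-optimal) control problem. -/
def V0 (n : ℕ) (T : ℝ) (A : Matrix (Fin n) (Fin n) ℝ) (B : Fin n → ℝ)
    (ξ : Fin n → ℝ) : ℝ :=
  sInf {c | ∃ u, Admissible n T A B ξ u ∧ c = L0Norm T u}

/-- Value function of the `L¹`-optimal control problem. -/
def V1 (n : ℕ) (T : ℝ) (A : Matrix (Fin n) (Fin n) ℝ) (B : Fin n → ℝ)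
    (ξ : Fin n → ℝ) : ℝ :=
  sInf {c | ∃ u, Admissible n T A B ξ u ∧ c = L1Norm T u}

/-- The reachable set `R`. -/
def Reach (n : ℕ) (T : ℝ) (A : Matrix (Fin n) (Fin n) ℝ) (B : Fin n → ℝ) :
    Set (Fin n → ℝ) :=
  {x | ∃ u, Measurable u ∧ MagBdd T u ∧ x = stateInt n T A B u}

/-- The set `R_α`. -/
def ReachL1 (n : ℕ) (T : ℝ) (A : Matrix (Fin n) (Fin n) ℝ) (B : Fin n → ℝ)
    (α : ℝ) : Set (Fin n → ℝ) :=
  {x | ∃ u, Measurable u ∧ MagBdd T u ∧ L1Norm T u ≤ α ∧ x = stateInt n T A B u}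

open Classical in
/-- The extended value function `V̄`. -/
def Vbar (n : ℕ) (T : ℝ) (A : Matrix (Fin n) (Fin n) ℝ) (B : Fin n → ℝ)
    (ξ : Fin n → ℝ) : ℝ :=
  if ξ ∈ Reach n T A B then V0 n T A B ξ else T

section expo
open scoped Matrix.Norms.Operator

def evalL (n : ℕ) (p : (Fin n → ℝ) →L[ℝ] ℝ) (B : Fin n → ℝ) (C : Matrix (Fin n) (Fin n) ℝ) :
    Matrix (Fin n) (Fin n) ℝ →L[ℝ] ℝ :=
  LinearMap.toContinuousLinearMap
    { toFun := fun M => p ((C * M).mulVec B)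
      map_add' := by intro x y; rw [mul_add, Matrix.add_mulVec, map_add]
      map_smul' := by
        intro c x
        rw [mul_smul_comm, Matrix.smul_mulVec, map_smul]; rfl }

lemma evalL_apply (n : ℕ) (p : (Fin n → ℝ) →L[ℝ] ℝ) (B : Fin n → ℝ)
    (C M : Matrix (Fin n) (Fin n) ℝ) : evalL n p B C M = p ((C * M).mulVec B) := rfl

lemma hasDerivAt_aux (n : ℕ) (p : (Fin n → ℝ) →L[ℝ] ℝ) (A C : Matrix (Fin n) (Fin n) ℝ)
    (B : Fin n → ℝ) (s : ℝ) :
    HasDerivAt (fun s : ℝ => p ((C * NormedSpace.exp ((-s) • A)).mulVec B))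
      (-p ((C * A * NormedSpace.exp ((-s) • A)).mulVec B)) s := by
  have h1 := hasDerivAt_exp_smul_const' (𝕂 := ℝ) (-A) s
  have h2 := (evalL n p B C).hasFDerivAt.comp_hasDerivAt s h1
  have e : ∀ s : ℝ, (-s) • A = s • (-A) := fun s => by simp
  simp only [e]
  refine HasDerivAt.congr_deriv (f' := evalL n p B C (-A * NormedSpace.exp (s • -A))) h2 ?_
  rw [evalL_apply, ← mul_assoc, mul_neg, neg_mul, Matrix.neg_mulVec, map_neg]

lemma analytic_aux (n : ℕ) (p : (Fin n → ℝ) →L[ℝ] ℝ) (A : Matrix (Fin n) (Fin n) ℝ)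
    (B : Fin n → ℝ) :
    AnalyticOnNhd ℝ (fun s : ℝ => p ((NormedSpace.exp ((-s) • A)).mulVec B)) univ := by
  intro s _
  have h1 : AnalyticAt ℝ (NormedSpace.exp : Matrix (Fin n) (Fin n) ℝ → _) ((-s) • A) :=
    NormedSpace.exp_analytic (𝕂 := ℝ) _
  have h2 : AnalyticAt ℝ (fun s : ℝ => (-s) • A) s := by fun_prop
  have h4 : AnalyticAt ℝ (fun s : ℝ => NormedSpace.exp ((-s) • A)) s :=
    h1.comp (f := fun s : ℝ => (-s) • A) h2
  have h3 : AnalyticAt ℝ (fun s : ℝ => evalL n p B 1 (NormedSpace.exp ((-s) • A))) s :=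
    ((evalL n p B 1).analyticAt (NormedSpace.exp ((-s) • A))).comp
      (f := fun s : ℝ => NormedSpace.exp ((-s) • A)) h4
  refine AnalyticAt.congr h3 (Filter.Eventually.of_forall fun t => ?_)
  simp [evalL_apply]

lemma cont_f (n : ℕ) (A : Matrix (Fin n) (Fin n) ℝ) (B : Fin n → ℝ) :
    Continuous (fun s : ℝ => (NormedSpace.exp ((-s) • A)).mulVec B) := by
  have h : Continuous (fun s : ℝ => NormedSpace.exp ((-s) • A)) := by
    have : Continuous (NormedSpace.exp : Matrix (Fin n) (Fin n) ℝ → _) :=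
      NormedSpace.exp_continuous
    exact this.comp (by fun_prop)
  exact h.matrix_mulVec continuous_const
end expo

lemma nonconst_aux (n : ℕ) (A : Matrix (Fin n) (Fin n) ℝ) (B : Fin n → ℝ)
    (hctrb : (ctrbMatrix n A B).rank = n) (hA : A.det ≠ 0)
    (p : (Fin n → ℝ) →L[ℝ] ℝ) (hp : p ≠ 0) (c : ℝ) :
    ∃ s : ℝ, p ((NormedSpace.exp ((-s) • A)).mulVec B) - c ≠ 0 := by
  by_contra! hcon
  apply hp
  have key : ∀ k : ℕ, ∀ s : ℝ, p ((A ^ (k+1) * NormedSpace.exp ((-s) • A)).mulVec B) = 0 := by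
    intro k
    induction k with
    | zero =>
      intro s
      have h := hasDerivAt_aux n p A 1 B s
      have h0 : (fun s : ℝ => p ((1 * NormedSpace.exp ((-s) • A)).mulVec B)) = fun _ => c := by
        funext t; rw [one_mul]; linarith [hcon t]
      rw [h0] at h
      have := h.unique (hasDerivAt_const s c)
      simpa using this
    | succ k ih =>
      intro s
      have h := hasDerivAt_aux n p A (A^(k+1)) B s
      have h0 : (fun s : ℝ => p ((A^(k+1) * NormedSpace.exp ((-s) • A)).mulVec B)) =
        fun _ => 0 := by
        funext t; exact ih t
      rw [h0] at h
      have := h.unique (hasDerivAt_const s 0)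
      rw [pow_succ]
      simpa using this
  have key2 : ∀ k : ℕ, p (A.mulVec ((A ^ k).mulVec B)) = 0 := by
    intro k
    have := key k 0
    simpa [pow_succ'] using this
  have hr : LinearMap.range (ctrbMatrix n A B).mulVecLin = ⊤ := by
    apply Submodule.eq_top_of_finrank_eq
    rw [← Matrix.rank, hctrb]; simp
  refine ContinuousLinearMap.ext fun x => ?_
  obtain ⟨y, hy⟩ := LinearMap.range_eq_top.1 hr (A⁻¹.mulVec x)
  have hx : x = A.mulVec ((ctrbMatrix n A B).mulVec y) := by
    rw [Matrix.mulVecLin_apply] at hy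
    rw [hy, Matrix.mulVec_mulVec, Matrix.mul_nonsing_inv _ (isUnit_iff_ne_zero.2 hA),
      Matrix.one_mulVec]
  have hs : (ctrbMatrix n A B).mulVec y = ∑ j : Fin n, y j • (A ^ (j : ℕ)).mulVec B := by
    ext i
    simp [Matrix.mulVec, dotProduct, ctrbMatrix, Finset.sum_apply, mul_comm]
  rw [hx, hs, ← Matrix.mulVecLin_apply, map_sum, map_sum]
  refine Finset.sum_eq_zero fun j _ => ?_
  rw [map_smul, map_smul, Matrix.mulVecLin_apply, key2, smul_zero]

lemma null_aux (n : ℕ) (A : Matrix (Fin n) (Fin n) ℝ) (B : Fin n → ℝ)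
    (hctrb : (ctrbMatrix n A B).rank = n) (hA : A.det ≠ 0)
    (p : (Fin n → ℝ) →L[ℝ] ℝ) (hp : p ≠ 0) (c : ℝ) :
    ∀ᵐ s : ℝ, p ((NormedSpace.exp ((-s) • A)).mulVec B) ≠ c := by
  obtain ⟨x, hx⟩ := nonconst_aux n A B hctrb hA p hp c
  have h1 : AnalyticOnNhd ℝ (fun s : ℝ => p ((NormedSpace.exp ((-s) • A)).mulVec B) - c) univ :=
    (analytic_aux n p A B).sub analyticOnNhd_const
  have h2 := h1.preimage_zero_mem_codiscrete hx
  have h3 : _ ∈ ae ((volume : Measure ℝ).restrict univ) :=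
    (ae_restrict_le_codiscreteWithin (μ := (volume : Measure ℝ)) MeasurableSet.univ) h2
  rw [Measure.restrict_univ] at h3
  filter_upwards [h3] with s hs h
  exact hs (sub_eq_zero.2 h)

def SS (n : ℕ) (T : ℝ) (f : ℝ → Fin n → ℝ) (c : ℝ) : Set (Fin n → ℝ) :=
  {x | ∃ u, Measurable u ∧ MagBdd T u ∧ L1Norm T u ≤ c ∧ x = ∫ s in Icc (0:ℝ) T, u s • f s}

lemma intg {E : Type*} [NormedAddCommGroup E] [NormedSpace ℝ E] [SecondCountableTopology E]
    (T : ℝ) (w : ℝ → ℝ) (hw : Measurable w) (C : ℝ) (hb : ∀ t ∈ Icc (0:ℝ) T, |w t| ≤ C)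
    (f : ℝ → E) (hf : Continuous f) :
    Integrable (fun s => w s • f s) (volume.restrict (Icc (0:ℝ) T)) := by
  have h1 : Integrable (fun s => C * ‖f s‖) (volume.restrict (Icc (0:ℝ) T)) :=
    (hf.norm.integrableOn_Icc).const_mul C
  refine h1.mono' ?_ ?_
  · exact (hw.aestronglyMeasurable).smul hf.aestronglyMeasurable
  · filter_upwards [ae_restrict_mem measurableSet_Icc] with s hs
    rw [norm_smul]
    exact mul_le_mul_of_nonneg_right (hb s hs) (norm_nonneg _)

lemma intg1 (T : ℝ) (w : ℝ → ℝ) (hw : Measurable w) (C : ℝ)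
    (hb : ∀ t ∈ Icc (0:ℝ) T, |w t| ≤ C) :
    Integrable w (volume.restrict (Icc (0:ℝ) T)) := by
  simpa using intg T w hw C hb (fun _ => (1:ℝ)) continuous_const

lemma L0_eq (T : ℝ) (u : ℝ → ℝ) (hu : Measurable u) :
    L0Norm T u = ∫ t in Icc (0:ℝ) T, (if u t ≠ 0 then (1:ℝ) else 0) := by
  have hm : MeasurableSet {t | u t ≠ 0} := (hu (measurableSet_singleton 0)).compl
  have : (fun t => if u t ≠ 0 then (1:ℝ) else 0) = indicator {t | u t ≠ 0} 1 := by
    funext t; simp [indicator]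
  rw [this, integral_indicator_one hm, L0Norm, Measure.real, Measure.restrict_apply hm]
  congr 2
  ext t; simp [and_comm]

lemma L1_le_L0 (T : ℝ) (u : ℝ → ℝ) (hu : Measurable u) (hb : MagBdd T u) :
    L1Norm T u ≤ L0Norm T u := by
  rw [L0_eq T u hu, L1Norm]
  have hm : MeasurableSet {t | u t ≠ 0} := (hu (measurableSet_singleton 0)).compl
  refine setIntegral_mono_on (intg1 T _ hu.abs 1 (by simpa [MagBdd] using hb)) 
    (intg1 T _ (Measurable.ite hm measurable_const measurable_const) 1 ?_) measurableSet_Icc ?_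
  · intro t _; split_ifs <;> simp
  · intro t ht
    have := hb t ht
    split_ifs with h
    · exact this
    · simp_all

lemma L0_le (T : ℝ) (hT : 0 < T) (u : ℝ → ℝ) : L0Norm T u ≤ T := by
  have : volume {t ∈ Icc (0:ℝ) T | u t ≠ 0} ≤ volume (Icc (0:ℝ) T) :=
    measure_mono (sep_subset _ _)
  have h2 := ENNReal.toReal_mono (by simp) this
  simpa [L0Norm, hT.le] using h2

def vstar (θ : ℝ) (h : ℝ → ℝ) (s : ℝ) : ℝ :=
  if θ < h s then 1 else if h s < -θ then -1 else 0

lemma vstar_meas (θ : ℝ) (h : ℝ → ℝ) (hh : Continuous h) : Measurable (vstar θ h) := by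
  unfold vstar
  refine Measurable.ite (measurableSet_lt measurable_const hh.measurable) measurable_const
    (Measurable.ite (measurableSet_lt hh.measurable measurable_const) measurable_const
      measurable_const)

lemma vstar_bd (θ : ℝ) (h : ℝ → ℝ) (s : ℝ) : |vstar θ h s| ≤ 1 := by
  unfold vstar; split_ifs <;> simp

lemma vstar_abs (θ : ℝ) (_hθ : 0 ≤ θ) (h : ℝ → ℝ) (s : ℝ) :
    |vstar θ h s| = if θ < |h s| then 1 else 0 := by
  unfold vstar; simp only [lt_abs, lt_neg]
  by_cases h1 : θ < h s
  · simp [h1]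
  · by_cases h2 : h s < -θ <;> simp [h1, h2]

lemma vstar_ne (θ : ℝ) (h : ℝ → ℝ) (s : ℝ) :
    (if vstar θ h s ≠ 0 then (1:ℝ) else 0) = |vstar θ h s| := by
  unfold vstar; split_ifs <;> simp_all

lemma vstar_L0 (T θ : ℝ) (h : ℝ → ℝ) (hh : Continuous h) :
    L0Norm T (vstar θ h) = L1Norm T (vstar θ h) := by
  rw [L0_eq T _ (vstar_meas θ h hh), L1Norm]
  simp only [vstar_ne]

lemma exists_level (T : ℝ) (hT : 0 < T) (h : ℝ → ℝ) (hh : Continuous h)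
    (hn : ∀ c : ℝ, ∀ᵐ s : ℝ, h s ≠ c) (c : ℝ) (hc0 : 0 ≤ c) (hcT : c ≤ T) :
    ∃ θ, 0 ≤ θ ∧ L1Norm T (vstar θ h) = c := by
  set φ : ℝ → ℝ := fun θ => ∫ t in Icc (0:ℝ) T, (if θ < |h t| then (1:ℝ) else 0) with hφ
  have hcont : Continuous φ := by
    rw [continuous_iff_continuousAt]
    intro θ₀
    refine continuousAt_of_dominated (bound := fun _ => 1) ?_ ?_ (by simp) ?_
    · refine Filter.Eventually.of_forall fun θ => Measurable.aestronglyMeasurable ?_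
      exact Measurable.ite (measurableSet_lt measurable_const hh.abs.measurable) measurable_const
        measurable_const
    · refine Filter.Eventually.of_forall fun θ => Filter.Eventually.of_forall fun t => ?_
      split_ifs <;> simp
    · filter_upwards [ae_restrict_of_ae (hn θ₀), ae_restrict_of_ae (hn (-θ₀))] with t h1 h2
      have h3 : |h t| ≠ θ₀ := by
        intro h4
        rcases abs_choice (h t) with h5 | h5
        · exact h1 (by linarith)
        · exact h2 (by linarith)
      rcases lt_or_gt_of_ne h3 with h4 | h4
      · refine (continuousAt_const (y := (0:ℝ))).congr ?_
        filter_upwards [lt_mem_nhds h4] with θ hθ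
        rw [if_neg (by linarith)]
      · refine (continuousAt_const (y := (1:ℝ))).congr ?_
        filter_upwards [gt_mem_nhds h4] with θ hθ
        rw [if_pos (by linarith)]
  obtain ⟨M, hM⟩ := (isCompact_Icc (a := (0:ℝ)) (b := T)).exists_bound_of_continuousOn
    hh.continuousOn
  have hM0 : 0 ≤ M := (norm_nonneg _).trans (hM 0 ⟨le_rfl, hT.le⟩)
  have e0 : φ 0 = T := by
    have : φ 0 = ∫ t in Icc (0:ℝ) T, (1:ℝ) := by
      refine integral_congr_ae ?_
      filter_upwards [ae_restrict_of_ae (hn 0)] with t ht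
      rw [if_pos (abs_pos.2 ht)]
    rw [this]; simp [hT.le]
  have eM : φ M = 0 := by
    have : φ M = ∫ t in Icc (0:ℝ) T, (0:ℝ) := by
      refine setIntegral_congr_fun measurableSet_Icc ?_
      intro t ht
      have := hM t ht
      rw [Real.norm_eq_abs] at this
      simp only
      rw [if_neg (not_lt.2 this)]
    rw [this]; simp
  have := intermediate_value_Icc' hM0 hcont.continuousOn
  rw [e0, eM] at this
  obtain ⟨θ, hθ, hc⟩ := this ⟨hc0, hcT⟩
  refine ⟨θ, hθ.1, ?_⟩
  rw [← hc, L1Norm]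
  simp only [vstar_abs θ hθ.1 h, hφ]

lemma ptwise (θ : ℝ) (hθ : 0 ≤ θ) (h : ℝ → ℝ) (s : ℝ) (u : ℝ) (hu : |u| ≤ 1) :
    |(|h s| - θ)| * |vstar θ h s - u| + θ * (|vstar θ h s| - |u|) ≤ h s * (vstar θ h s - u) := by
  have hu' := abs_le.1 hu
  unfold vstar
  split_ifs with h1 h2
  · have : |h s| = h s := abs_of_pos (by linarith)
    rw [this, abs_of_pos (by linarith : 0 < h s - θ), abs_of_nonneg (by linarith : 0 ≤ 1 - u)]
    simp only [abs_one]
    nlinarith [mul_le_mul_of_nonneg_left (le_abs_self u) hθ]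
  · have : |h s| = - h s := abs_of_neg (by linarith)
    rw [this, abs_of_pos (by linarith : 0 < -h s - θ), abs_of_nonpos (by linarith : -1 - u ≤ 0)]
    simp only [abs_neg, abs_one]
    nlinarith [mul_le_mul_of_nonneg_left (neg_abs_le u) hθ]
  · have h3 : |h s| ≤ θ := abs_le.2 ⟨by linarith, by linarith⟩
    rw [abs_of_nonpos (by linarith : |h s| - θ ≤ 0)]
    simp only [zero_sub, abs_neg, abs_zero]
    have := neg_abs_le (h s * u)
    have h4 := le_abs_self (h s * u)
    rw [abs_mul] at this h4
    nlinarith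

lemma core (n : ℕ) (T : ℝ) (hT : 0 < T) (f : ℝ → Fin n → ℝ) (hf : Continuous f)
    (hn : ∀ p : (Fin n → ℝ) →L[ℝ] ℝ, p ≠ 0 → ∀ c : ℝ, ∀ᵐ s : ℝ, p (f s) ≠ c)
    (c : ℝ) (hc0 : 0 ≤ c) (hcT : c ≤ T) (x : Fin n → ℝ) (hx : x ∈ closure (SS n T f c))
    (p : (Fin n → ℝ) →L[ℝ] ℝ) (hp : p ≠ 0) (hmax : ∀ y ∈ SS n T f c, p y ≤ p x) :
    ∃ v, Measurable v ∧ MagBdd T v ∧ L0Norm T v ≤ c ∧ x = ∫ s in Icc (0:ℝ) T, v s • f s := by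
  set h : ℝ → ℝ := fun s => p (f s) with hh
  have hhc : Continuous h := p.continuous.comp hf
  obtain ⟨θ, hθ, hL⟩ := exists_level T hT h hhc (hn p hp) c hc0 hcT
  set v := vstar θ h with hv
  have hvm : Measurable v := vstar_meas θ h hhc
  have hvb : MagBdd T v := fun t _ => vstar_bd θ h t
  refine ⟨v, hvm, hvb, by rw [hv, vstar_L0 T θ h hhc, hL], ?_⟩
  have hvS : (∫ s in Icc (0:ℝ) T, v s • f s) ∈ SS n T f c := ⟨v, hvm, hvb, hL.le, rfl⟩
  obtain ⟨y, hyS, hyx⟩ := mem_closure_iff_seq_limit.1 hx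
  choose u hum hub huL huy using hyS
  have hpint : ∀ w : ℝ → ℝ, Measurable w → MagBdd T w →
      p (∫ s in Icc (0:ℝ) T, w s • f s) = ∫ s in Icc (0:ℝ) T, h s * w s := by
    intro w hw hb
    rw [← p.integral_comp_comm (intg T w hw 1 hb f hf)]
    simp [hh, mul_comm]
  have hI : ∀ w : ℝ → ℝ, Measurable w → MagBdd T w →
      Integrable (fun s => h s * w s) (volume.restrict (Icc (0:ℝ) T)) := by
    intro w hw hb
    simpa [mul_comm] using intg T w hw 1 hb h hhc
  have hdb : ∀ k, ∀ t ∈ Icc (0:ℝ) T, |v t - u k t| ≤ 2 := by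
    intro k t ht
    have h1 := hvb t ht
    have h2 := hub k t ht
    have := abs_sub (v t) (u k t)
    linarith
  set W : ℕ → ℝ → ℝ := fun k s => |(|h s| - θ)| * |v s - u k s| with hW
  have hWI : ∀ k, Integrable (W k) (volume.restrict (Icc (0:ℝ) T)) := by
    intro k
    have := intg T (fun s => |v s - u k s|) (hvm.sub (hum k)).abs 2
      (by simpa using hdb k) (fun s => |(|h s| - θ)|) (by fun_prop)
    simpa [hW, mul_comm] using this
  have hW0 : ∀ k s, 0 ≤ W k s := fun k s => by positivity
  have hineq : ∀ k, ∫ s in Icc (0:ℝ) T, W k s ≤ p x - p (y k) := by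
    intro k
    have i1 : Integrable (fun s => θ * (|v s| - |u k s|)) (volume.restrict (Icc (0:ℝ) T)) :=
      ((intg1 T _ hvm.abs 1 (by simpa [MagBdd] using hvb)).sub
        (intg1 T _ (hum k).abs 1 (by simpa [MagBdd] using hub k))).const_mul θ
    have h1 : ∫ s in Icc (0:ℝ) T, (W k s + θ * (|v s| - |u k s|)) ≤
        ∫ s in Icc (0:ℝ) T, (h s * v s - h s * u k s) := by
      refine setIntegral_mono_on ((hWI k).add i1) ((hI v hvm hvb).sub (hI _ (hum k) (hub k)))
        measurableSet_Icc ?_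
      intro s hs
      have := ptwise θ hθ h s (u k s) (hub k s hs)
      simp only [hW]
      rw [← mul_sub]
      exact this
    rw [integral_add (hWI k) i1, integral_const_mul,
      integral_sub (intg1 T _ hvm.abs 1 (by simpa [MagBdd] using hvb))
        (intg1 T _ (hum k).abs 1 (by simpa [MagBdd] using hub k)),
      integral_sub (hI v hvm hvb) (hI _ (hum k) (hub k)), ← hpint v hvm hvb,
      ← hpint _ (hum k) (hub k), ← huy k] at h1
    have h2 := hmax _ hvS
    have h3 : 0 ≤ θ * (L1Norm T v - L1Norm T (u k)) :=
      mul_nonneg hθ (by rw [hL]; linarith [huL k])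
    unfold L1Norm at h3
    linarith
  have hlim : Filter.Tendsto (fun k => ∫ s in Icc (0:ℝ) T, W k s) Filter.atTop (nhds 0) := by
    refine squeeze_zero (fun k => integral_nonneg (hW0 k)) hineq ?_
    have : Filter.Tendsto (fun k => p x - p (y k)) Filter.atTop (nhds (p x - p x)) :=
      tendsto_const_nhds.sub ((p.continuous.tendsto x).comp hyx)
    simpa using this
  have hmeas : TendstoInMeasure (volume.restrict (Icc (0:ℝ) T)) W Filter.atTop 0 := by
    refine tendstoInMeasure_of_tendsto_eLpNorm one_ne_zero
      (fun k => (hWI k).aestronglyMeasurable) aestronglyMeasurable_zero ?_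
    have e : ∀ k, eLpNorm (W k - 0) 1 (volume.restrict (Icc (0:ℝ) T)) =
        ENNReal.ofReal (∫ s in Icc (0:ℝ) T, W k s) := by
      intro k
      rw [sub_zero, eLpNorm_one_eq_lintegral_enorm, ← ofReal_integral_norm_eq_lintegral_enorm (hWI k)]
      congr 2
      funext s
      rw [Real.norm_of_nonneg (hW0 k s)]
    simp only [e]
    simpa using ENNReal.tendsto_ofReal hlim
  obtain ⟨ns, hns, hae⟩ := hmeas.exists_seq_tendsto_ae
  have hconv : Filter.Tendsto (fun k => ∫ s in Icc (0:ℝ) T, u (ns k) s • f s) Filter.atTop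
      (nhds (∫ s in Icc (0:ℝ) T, v s • f s)) := by
    refine tendsto_integral_of_dominated_convergence (fun s => ‖f s‖) ?_ ?_ ?_ ?_
    · intro k; exact (intg T _ (hum _) 1 (hub _) f hf).aestronglyMeasurable
    · exact hf.norm.integrableOn_Icc
    · intro k
      filter_upwards [ae_restrict_mem measurableSet_Icc] with s hs
      rw [norm_smul]
      exact mul_le_of_le_one_left (norm_nonneg _) (hub _ s hs)
    · filter_upwards [hae, ae_restrict_of_ae (hn p hp θ), ae_restrict_of_ae (hn p hp (-θ))]
        with s h1 h2 h3
      have h4 : |h s| - θ ≠ 0 := by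
        intro h4
        rcases abs_choice (h s) with h5 | h5
        · exact h2 (by simp only [hh] at *; linarith)
        · exact h3 (by simp only [hh] at *; linarith)
      have h6 : Filter.Tendsto (fun k => |v s - u (ns k) s|) Filter.atTop (nhds 0) := by
        have := h1.const_mul (|(|h s| - θ)|)⁻¹
        simp only [Pi.zero_apply, mul_zero, hW] at this
        refine this.congr fun k => ?_
        rw [← mul_assoc, inv_mul_cancel₀ (abs_ne_zero.2 h4), one_mul]
      have h7 : Filter.Tendsto (fun k => u (ns k) s) Filter.atTop (nhds (v s)) := by
        have := (tendsto_const_nhds (x := v s)).sub ((tendsto_zero_iff_abs_tendsto_zero _).2 h6)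
        simpa using this
      exact h7.smul_const (f s)
  have hconv2 : Filter.Tendsto (fun k => ∫ s in Icc (0:ℝ) T, u (ns k) s • f s) Filter.atTop
      (nhds x) := by
    simp only [← huy]
    exact hyx.comp hns.tendsto_atTop
  exact tendsto_nhds_unique hconv2 hconv

lemma support_aux (n : ℕ) (S : Set (Fin n → ℝ)) (hS : Convex ℝ S) (h0 : (0 : Fin n → ℝ) ∈ S)
    (x : Fin n → ℝ) (hx : x ∈ closure S) (hxi : x ∉ interior S) :
    ∃ p : (Fin n → ℝ) →L[ℝ] ℝ, p ≠ 0 ∧ ∀ y ∈ S, p y ≤ p x := by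
  by_cases hi : (interior S).Nonempty
  · exact geometric_hahn_banach_of_nonempty_interior_point hS hxi hi
  · rw [hS.interior_nonempty_iff_affineSpan_eq_top] at hi
    have hsp : Submodule.span ℝ S < ⊤ := by
      rw [lt_top_iff_ne_top]
      intro h
      apply hi
      have h1 := affineSpan_insert_zero (k := ℝ) S
      rw [insert_eq_of_mem h0, h] at h1
      exact SetLike.coe_injective (by simpa using h1)
    obtain ⟨q, hq0, hq⟩ := Submodule.exists_le_ker_of_lt_top _ hsp
    have hqS : ∀ y ∈ S, q y = 0 := fun y hy => hq (Submodule.subset_span hy)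
    have hqc : Continuous q := q.continuous_of_finiteDimensional
    have hqx : q x = 0 :=
      closure_minimal (t := {y | q y = 0}) hqS (isClosed_eq hqc continuous_const) hx
    refine ⟨LinearMap.toContinuousLinearMap q, ?_, ?_⟩
    · intro h
      apply hq0
      ext y
      simpa using congrArg (fun r => r (Pi.single y 1)) h
    · intro y hy
      simp [hqS y hy, hqx]

lemma SS_zero (n : ℕ) (T : ℝ) (f : ℝ → Fin n → ℝ) (c : ℝ) (hc : 0 ≤ c) : 0 ∈ SS n T f c :=
  ⟨fun _ => 0, measurable_const, fun _ _ => by simp, by simpa [L1Norm] using hc, by simp⟩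

lemma SS_convex (n : ℕ) (T : ℝ) (f : ℝ → Fin n → ℝ) (hf : Continuous f) (c : ℝ) :
    Convex ℝ (SS n T f c) := by
  rintro x ⟨u, hum, hub, huL, rfl⟩ y ⟨w, hwm, hwb, hwL, rfl⟩ a b ha hb hab
  have hle : ∀ t, |a * u t + b * w t| ≤ a * |u t| + b * |w t| := by
    intro t
    refine (abs_add_le _ _).trans ?_
    rw [abs_mul, abs_mul, abs_of_nonneg ha, abs_of_nonneg hb]
  have hm : Measurable (fun t => a * u t + b * w t) := (hum.const_mul a).add (hwm.const_mul b)
  have hbd : MagBdd T (fun t => a * u t + b * w t) := by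
    intro t ht
    have := hle t
    have := mul_le_mul_of_nonneg_left (hub t ht) ha
    have := mul_le_mul_of_nonneg_left (hwb t ht) hb
    simp only
    linarith
  refine ⟨fun t => a * u t + b * w t, hm, hbd, ?_, ?_⟩
  · have i1 := (intg1 T _ hum.abs 1 (by simpa [MagBdd] using hub)).const_mul a
    have i2 := (intg1 T _ hwm.abs 1 (by simpa [MagBdd] using hwb)).const_mul b
    have : L1Norm T (fun t => a * u t + b * w t) ≤
        ∫ t in Icc (0:ℝ) T, (a * |u t| + b * |w t|) :=
      integral_mono (intg1 T _ hm.abs 1 (by simpa [MagBdd] using hbd)) (i1.add i2) hle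
    rw [integral_add i1 i2, integral_const_mul, integral_const_mul] at this
    have h1 := mul_le_mul_of_nonneg_left huL ha
    have h2 := mul_le_mul_of_nonneg_left hwL hb
    unfold L1Norm at h1 h2 this ⊢
    have h3 : a * c + b * c = c := by rw [← add_mul, hab, one_mul]
    linarith
  · rw [← integral_smul, ← integral_smul, ← integral_add]
    · simp only [add_smul, mul_smul]
    · exact (intg T _ hum 1 hub f hf).smul a
    · exact (intg T _ hwm 1 hwb f hf).smul b

lemma SS_smul (n : ℕ) (T : ℝ) (f : ℝ → Fin n → ℝ) (c : ℝ) (r : ℝ) (hr0 : 0 ≤ r) (hr1 : r ≤ 1)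
    (x : Fin n → ℝ) (hx : x ∈ SS n T f c) : r • x ∈ SS n T f (r * c) := by
  obtain ⟨u, hum, hub, huL, rfl⟩ := hx
  refine ⟨fun t => r * u t, hum.const_mul r, ?_, ?_, ?_⟩
  · intro t ht
    simp only [abs_mul, abs_of_nonneg hr0]
    exact mul_le_one₀ hr1 (abs_nonneg _) (hub t ht)
  · unfold L1Norm at huL ⊢
    simp only [abs_mul, abs_of_nonneg hr0]
    rw [integral_const_mul]
    exact mul_le_mul_of_nonneg_left huL hr0
  · rw [← integral_smul]
    simp only [mul_smul]

lemma SS_closure_smul (n : ℕ) (T : ℝ) (f : ℝ → Fin n → ℝ) (c : ℝ) (r : ℝ) (hr0 : 0 ≤ r)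
    (hr1 : r ≤ 1) (x : Fin n → ℝ) (hx : x ∈ closure (SS n T f c)) :
    r • x ∈ closure (SS n T f (r * c)) :=
  map_mem_closure (continuous_const_smul r) hx (fun y hy => SS_smul n T f c r hr0 hr1 y hy)

lemma SS_bdd (n : ℕ) (T : ℝ) (f : ℝ → Fin n → ℝ) (hf : Continuous f) :
    ∃ M, ∀ c, ∀ x ∈ closure (SS n T f c), ‖x‖ ≤ M * c := by
  obtain ⟨M, hM⟩ := (isCompact_Icc (a := (0:ℝ)) (b := T)).exists_bound_of_continuousOn
    hf.continuousOn
  refine ⟨max M 0, fun c x hx => ?_⟩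
  refine closure_minimal (t := {x | ‖x‖ ≤ max M 0 * c}) ?_
    (isClosed_le continuous_norm continuous_const) hx
  rintro x ⟨u, hum, hub, huL, rfl⟩
  have h1 : ‖∫ s in Icc (0:ℝ) T, u s • f s‖ ≤ ∫ s in Icc (0:ℝ) T, max M 0 * |u s| := by
    refine norm_integral_le_of_norm_le
      ((intg1 T _ hum.abs 1 (by simpa [MagBdd] using hub)).const_mul _) ?_
    filter_upwards [ae_restrict_mem measurableSet_Icc] with s hs
    rw [norm_smul, mul_comm, Real.norm_eq_abs]
    exact mul_le_mul_of_nonneg_right ((hM s hs).trans (le_max_left _ _)) (abs_nonneg _)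
  rw [integral_const_mul] at h1
  exact h1.trans (mul_le_mul_of_nonneg_left huL (le_max_right _ _))

lemma main_aux (n : ℕ) (T : ℝ) (hT : 0 < T) (f : ℝ → Fin n → ℝ) (hf : Continuous f)
    (hn : ∀ p : (Fin n → ℝ) →L[ℝ] ℝ, p ≠ 0 → ∀ c : ℝ, ∀ᵐ s : ℝ, p (f s) ≠ c)
    (c : ℝ) (hc0 : 0 ≤ c) (hcT : c ≤ T) (x : Fin n → ℝ) (hx : x ∈ closure (SS n T f c)) :
    ∃ v, Measurable v ∧ MagBdd T v ∧ L0Norm T v ≤ c ∧ x = ∫ s in Icc (0:ℝ) T, v s • f s := by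
  set E : Set ℝ := {d | 0 ≤ d ∧ d ≤ c ∧ x ∈ closure (SS n T f d)} with hE
  have hEne : E.Nonempty := ⟨c, hc0, le_rfl, hx⟩
  have hEbd : BddBelow E := ⟨0, fun d hd => hd.1⟩
  obtain ⟨d, -, hd, hdE⟩ := exists_seq_tendsto_sInf hEne hEbd
  have hm0 : 0 ≤ sInf E := le_csInf hEne fun d hd => hd.1
  have hmc : sInf E ≤ c := csInf_le hEbd ⟨hc0, le_rfl, hx⟩
  rcases hm0.eq_or_lt with hm | hm
  · obtain ⟨M, hM⟩ := SS_bdd n T f hf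
    have h1 : Filter.Tendsto (fun k => M * d k) Filter.atTop (nhds 0) := by
      have := hd.const_mul M
      rwa [← hm, mul_zero] at this
    have h2 : ‖x‖ ≤ 0 := ge_of_tendsto' h1 fun k => hM _ x (hdE k).2.2
    have h3 : x = 0 := norm_le_zero_iff.1 h2
    refine ⟨fun _ => 0, measurable_const, fun _ _ => by simp, ?_, by simp [h3]⟩
    simpa [L0Norm] using hc0
  · set m := sInf E with hmdef
    have hdm : ∀ k, m ≤ d k := fun k => csInf_le hEbd (hdE k)
    have hxm : x ∈ closure (SS n T f m) := by
      have h1 : Filter.Tendsto (fun k => (m / d k) • x) Filter.atTop (nhds ((m / m) • x)) :=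
        (tendsto_const_nhds.div hd hm.ne').smul_const x
      rw [div_self hm.ne', one_smul] at h1
      refine isClosed_closure.mem_of_tendsto h1 (Filter.Eventually.of_forall fun k => ?_)
      have hk : 0 < d k := hm.trans_le (hdm k)
      have := SS_closure_smul n T f (d k) (m / d k) (by positivity)
        ((div_le_one hk).2 (hdm k)) x (hdE k).2.2
      rwa [div_mul_cancel₀ _ hk.ne'] at this
    have hxi : x ∉ interior (SS n T f m) := by
      intro hxi
      have h1 : Filter.Tendsto (fun δ : ℝ => (1 + δ) • x) (nhdsWithin 0 (Ioi 0)) (nhds x) := by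
        have : Filter.Tendsto (fun δ : ℝ => (1 + δ) • x) (nhds 0) (nhds ((1 + (0:ℝ)) • x)) :=
          Continuous.tendsto (by fun_prop) 0
        simpa using this.mono_left nhdsWithin_le_nhds
      obtain ⟨δ, hδ1, hδ0⟩ := ((h1.eventually (mem_interior_iff_mem_nhds.1 hxi)).and
        self_mem_nhdsWithin).exists
      have hδ : (0:ℝ) < δ := hδ0
      have h2 := SS_smul n T f m (1 + δ)⁻¹ (by positivity)
        (inv_le_one_of_one_le₀ (by linarith)) _ hδ1
      rw [smul_smul, inv_mul_cancel₀ (by positivity), one_smul] at h2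
      have h3 : (1 + δ)⁻¹ * m < m := by
        have : (1 + δ)⁻¹ < 1 := inv_lt_one_of_one_lt₀ (by linarith)
        nlinarith
      have h4 : m ≤ (1 + δ)⁻¹ * m :=
        csInf_le hEbd ⟨by positivity, by linarith, subset_closure h2⟩
      linarith
    obtain ⟨p, hp, hpm⟩ := support_aux n _ (SS_convex n T f hf m) (SS_zero n T f m hm.le) x hxm hxi
    obtain ⟨v, h1, h2, h3, h4⟩ :=
      core n T hT f hf hn m hm.le (hmc.trans hcT) x hxm p hp hpm
    exact ⟨v, h1, h2, h3.trans hmc, h4⟩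

theorem Vbar_lowerSemicontinuous (n : ℕ) (T : ℝ) (hT : 0 < T)
    (A : Matrix (Fin n) (Fin n) ℝ) (B : Fin n → ℝ)
    (hctrb : (ctrbMatrix n A B).rank = n) (hA : A.det ≠ 0) :
    ∀ α : ℝ, IsOpen {ξ : Fin n → ℝ | α < Vbar n T A B ξ} := by
  have hf := cont_f n A B
  have hn := null_aux n A B hctrb hA
  have hbdd : ∀ ξ : Fin n → ℝ, BddBelow {c | ∃ u, Admissible n T A B ξ u ∧ c = L0Norm T u} := by
    intro ξ
    refine ⟨0, ?_⟩
    rintro c ⟨u, -, rfl⟩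
    exact ENNReal.toReal_nonneg
  have hneg : ∀ u : ℝ → ℝ, stateInt n T A B (fun t => -u t) = - stateInt n T A B u := by
    intro u
    simp only [stateInt, neg_smul]
    rw [integral_neg]
  have hne : ∀ ξ ∈ Reach n T A B,
      {c | ∃ u, Admissible n T A B ξ u ∧ c = L0Norm T u}.Nonempty := by
    rintro ξ ⟨u, hum, hub, rfl⟩
    exact ⟨_, fun t => -u t, ⟨hum.neg, fun t ht => by simpa using hub t ht, hneg u⟩, rfl⟩
  have hle : ∀ ξ, Vbar n T A B ξ ≤ T := by
    intro ξ
    unfold Vbar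
    split_ifs with h
    · obtain ⟨c, u, hu, rfl⟩ := hne ξ h
      exact (csInf_le (hbdd ξ) ⟨u, hu, rfl⟩).trans (L0_le T hT u)
    · exact le_rfl
  -- small value implies membership in the `L¹` reachable set
  have hfwd : ∀ ξ c, c ≤ T → Vbar n T A B ξ < c →
      -ξ ∈ SS n T (fun s : ℝ => (NormedSpace.exp ((-s) • A)).mulVec B) c := by
    intro ξ c hcT hlt
    unfold Vbar at hlt
    split_ifs at hlt with h
    · obtain ⟨_, ⟨u, hu, rfl⟩, huc⟩ := exists_lt_of_csInf_lt (hne ξ h) hlt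
      exact ⟨u, hu.1, hu.2.1, (L1_le_L0 T u hu.1 hu.2.1).trans huc.le, hu.2.2.symm⟩
    · linarith
  have hbwd : ∀ ξ c, 0 ≤ c → c ≤ T →
      -ξ ∈ closure (SS n T (fun s : ℝ => (NormedSpace.exp ((-s) • A)).mulVec B) c) →
      Vbar n T A B ξ ≤ c := by
    intro ξ c hc0 hcT hcl
    obtain ⟨v, hvm, hvb, hvL, hv⟩ := main_aux n T hT _ hf hn c hc0 hcT _ hcl
    have hR : ξ ∈ Reach n T A B := by
      refine ⟨fun t => -v t, hvm.neg, fun t ht => by simpa using hvb t ht, ?_⟩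
      rw [hneg v]
      have : stateInt n T A B v = -ξ := hv.symm
      rw [this, neg_neg]
    unfold Vbar
    rw [if_pos hR]
    exact (csInf_le (hbdd ξ) ⟨v, ⟨hvm, hvb, hv.symm⟩, rfl⟩).trans hvL
  have hnn : ∀ ξ, 0 ≤ Vbar n T A B ξ := by
    intro ξ
    unfold Vbar
    split_ifs with h
    · refine le_csInf (hne ξ h) ?_
      rintro c ⟨u, -, rfl⟩
      exact ENNReal.toReal_nonneg
    · exact hT.le
  intro α
  rw [← isClosed_compl_iff, ← isSeqClosed_iff_isClosed]
  intro ξ ξ₀ hξ hlim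
  simp only [mem_compl_iff, mem_setOf_eq, not_lt] at hξ ⊢
  have hα0 : 0 ≤ α := (hnn (ξ 0)).trans (hξ 0)
  refine le_of_forall_gt_imp_ge_of_dense fun c hc => ?_
  rcases le_total T c with hcT | hcT
  · exact (hle ξ₀).trans hcT
  · refine hbwd ξ₀ c (by linarith) hcT ?_
    exact mem_closure_of_tendsto hlim.neg
      (Filter.Eventually.of_forall fun k => hfwd _ c hcT ((hξ k).trans_lt hc))
end
end

section
/- Suppose the pair (A,B) is controllable (the controllability matrix [B, AB, …, A^{n-1}B] has rank n) and A is nonsingular. Then the L¹ value function V₁ is continuous on the reachable set R. -/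
open MeasureTheory Set

noncomputable section

/-- The kernel `s ↦ e^{-sA} B`. -/
def ker_g {n : ℕ} (A : Matrix (Fin n) (Fin n) ℝ) (B : Fin n → ℝ) (s : ℝ) : Fin n → ℝ :=
  (NormedSpace.exp ((-s) • A)).mulVec B

/-- Evaluation of a functional on `M B`, linear in `M`. -/
def evalLin {n : ℕ} (B : Fin n → ℝ) (p : StrongDual ℝ (Fin n → ℝ)) :
    Matrix (Fin n) (Fin n) ℝ →ₗ[ℝ] ℝ where
  toFun M := p (M.mulVec B)
  map_add' M N := by simp [Matrix.add_mulVec]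
  map_smul' c M := by simp [Matrix.smul_mulVec]

open scoped Matrix.Norms.Operator in
lemma continuous_ker_g {n : ℕ} (A : Matrix (Fin n) (Fin n) ℝ) (B : Fin n → ℝ) :
    Continuous (ker_g A B) := by
  unfold ker_g
  have h : Continuous fun s : ℝ => NormedSpace.exp ((-s) • A) :=
    (NormedSpace.exp_continuous (𝔸 := Matrix (Fin n) (Fin n) ℝ)).comp (by fun_prop)
  exact h.matrix_mulVec continuous_const

open scoped Matrix.Norms.Operator in
lemma analytic_p {n : ℕ} (A : Matrix (Fin n) (Fin n) ℝ) (B : Fin n → ℝ)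
    (p : StrongDual ℝ (Fin n → ℝ)) :
    AnalyticOnNhd ℝ (fun s => p (ker_g A B s)) Set.univ := by
  intro s _
  have h1 : AnalyticAt ℝ (fun s : ℝ => (-s) • A) s := by fun_prop
  have h2 : AnalyticAt ℝ (fun s : ℝ => NormedSpace.exp ((-s) • A)) s :=
    AnalyticAt.fun_comp (f := fun s : ℝ => (-s) • A)
      (NormedSpace.exp_analytic (𝕂 := ℝ) ((-s) • A)) h1
  exact ((LinearMap.toContinuousLinearMap (evalLin B p)).analyticAt _).comp h2

open scoped Matrix.Norms.Operator in
lemma all_zero {n : ℕ} (A : Matrix (Fin n) (Fin n) ℝ) (B : Fin n → ℝ)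
    (p : StrongDual ℝ (Fin n → ℝ)) (h : ∀ s, p (ker_g A B s) = 0) (k : ℕ) :
    ∀ s : ℝ, p ((A ^ k * NormedSpace.exp ((-s) • A)).mulVec B) = 0 := by
  induction k with
  | zero => intro s; simpa [ker_g] using h s
  | succ k ih =>
    intro s
    have h1 : HasDerivAt (fun s : ℝ => NormedSpace.exp ((-s) • A))
        (-(A * NormedSpace.exp ((-s) • A))) s := by
      have := hasDerivAt_exp_smul_const' (𝕂 := ℝ) (-A) s
      simp only [smul_neg, neg_mul, ← neg_smul] at this
      exact this
    have h2 := h1.const_mul (A ^ k)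
    have h3 := (LinearMap.toContinuousLinearMap (evalLin B p)).hasFDerivAt.comp_hasDerivAt s h2
    have h4 : ((LinearMap.toContinuousLinearMap (evalLin B p)) ∘
        fun s : ℝ => A ^ k * NormedSpace.exp ((-s) • A)) = fun _ => 0 := by
      funext s
      exact ih s
    rw [h4] at h3
    have h5 := h3.unique (hasDerivAt_const s (0:ℝ))
    have h6 : p ((A ^ k * -(A * NormedSpace.exp ((-s) • A))).mulVec B) = 0 := h5
    rw [mul_neg, Matrix.neg_mulVec, map_neg, neg_eq_zero, ← mul_assoc, ← pow_succ] at h6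
    exact h6

lemma p_eq_zero {n : ℕ} (A : Matrix (Fin n) (Fin n) ℝ) (B : Fin n → ℝ)
    (hctrb : (ctrbMatrix n A B).rank = n)
    (p : StrongDual ℝ (Fin n → ℝ)) (h : ∀ s, p (ker_g A B s) = 0) : p = 0 := by
  have hk : ∀ k : ℕ, p ((A ^ k).mulVec B) = 0 := by
    intro k
    simpa using all_zero A B p h k 0
  have hr : LinearMap.range (ctrbMatrix n A B).mulVecLin = ⊤ := by
    apply Submodule.eq_top_of_finrank_eq
    rw [Module.finrank_fin_fun]
    exact hctrb
  ext1 x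
  obtain ⟨v, rfl⟩ : x ∈ LinearMap.range (ctrbMatrix n A B).mulVecLin := by rw [hr]; trivial
  rw [Matrix.mulVecLin_apply, Matrix.mulVec_eq_sum, map_sum]
  simp only [_root_.zero_apply]
  apply Finset.sum_eq_zero
  intro j _
  have : (ctrbMatrix n A B).transpose j = (A ^ (j:ℕ)).mulVec B := by
    ext i; rfl
  rw [this]
  simp [hk]

lemma ae_ne {n : ℕ} (T : ℝ) (A : Matrix (Fin n) (Fin n) ℝ) (B : Fin n → ℝ)
    (hctrb : (ctrbMatrix n A B).rank = n)
    (p : StrongDual ℝ (Fin n → ℝ)) (hp : p ≠ 0) :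
    ∀ᵐ s ∂(volume.restrict (Icc (0:ℝ) T)), p (ker_g A B s) ≠ 0 := by
  have hex : ∃ s, p (ker_g A B s) ≠ 0 := by
    by_contra! hc
    exact hp (p_eq_zero A B hctrb p hc)
  obtain ⟨s, hs⟩ := hex
  have h1 := (analytic_p A B p).preimage_zero_mem_codiscrete hs
  have h2 : ((fun s => p (ker_g A B s)) ⁻¹' {0}ᶜ) ∈ Filter.codiscreteWithin (Icc (0:ℝ) T) :=
    Filter.codiscreteWithin_mono (subset_univ _) h1
  exact ae_restrict_le_codiscreteWithin measurableSet_Icc h2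

/-- Measurable controls bounded by one are integrable. -/
lemma intg_s7 {T : ℝ} {u : ℝ → ℝ} (hu : Measurable u) (hb : MagBdd T u) :
    IntegrableOn u (Icc 0 T) := by
  refine Measure.integrableOn_of_bounded (M := 1) (by simp) hu.aestronglyMeasurable ?_
  filter_upwards [ae_restrict_mem measurableSet_Icc] with t ht
  exact hb t ht

lemma intg_mul {T : ℝ} {u f : ℝ → ℝ} (hu : Measurable u) (hb : MagBdd T u) (hf : Continuous f) :
    IntegrableOn (fun s => u s * f s) (Icc 0 T) :=
  (intg_s7 hu hb).mul_continuousOn hf.continuousOn isCompact_Icc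

lemma intg_g {n : ℕ} {T : ℝ} {u : ℝ → ℝ} (A : Matrix (Fin n) (Fin n) ℝ) (B : Fin n → ℝ)
    (hu : Measurable u) (hb : MagBdd T u) :
    IntegrableOn (fun s => u s • ker_g A B s) (Icc 0 T) :=
  (intg_s7 hu hb).smul_continuousOn (continuous_ker_g A B).continuousOn isCompact_Icc

lemma p_stateInt {n : ℕ} {T : ℝ} {u : ℝ → ℝ} (A : Matrix (Fin n) (Fin n) ℝ) (B : Fin n → ℝ)
    (hu : Measurable u) (hb : MagBdd T u) (p : StrongDual ℝ (Fin n → ℝ)) :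
    p (stateInt n T A B u) = ∫ s in Icc (0:ℝ) T, u s * p (ker_g A B s) := by
  have := p.integral_comp_comm (intg_g A B hu hb)
  simp only [map_smul, smul_eq_mul] at this
  exact this.symm

lemma magBdd_comb {T : ℝ} {u v : ℝ → ℝ} {a b : ℝ} (hu : MagBdd T u) (hv : MagBdd T v)
    (ha : 0 ≤ a) (hb : 0 ≤ b) (hab : a + b = 1) : MagBdd T (fun s => a * u s + b * v s) := by
  intro t ht
  have h1 := abs_le.1 (hu t ht)
  have h2 := abs_le.1 (hv t ht)
  rw [abs_le]
  constructor <;> nlinarith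

lemma stateInt_comb {n : ℕ} {T : ℝ} {u v : ℝ → ℝ} (A : Matrix (Fin n) (Fin n) ℝ) (B : Fin n → ℝ)
    (hu : Measurable u) (hbu : MagBdd T u) (hv : Measurable v) (hbv : MagBdd T v) (a b : ℝ) :
    stateInt n T A B (fun s => a * u s + b * v s) =
      a • stateInt n T A B u + b • stateInt n T A B v := by
  have h := integral_add ((intg_g A B hu hbu).smul a) ((intg_g A B hv hbv).smul b)
  unfold stateInt
  rw [← integral_smul, ← integral_smul]
  refine Eq.trans ?_ h
  congr 1
  funext s
  simp [ker_g, add_smul, mul_smul]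

lemma L1_comb {T : ℝ} {u v : ℝ → ℝ}
    (hu : Measurable u) (hbu : MagBdd T u) (hv : Measurable v) (hbv : MagBdd T v) {a b : ℝ}
    (ha : 0 ≤ a) (hb : 0 ≤ b) (hab : a + b = 1) :
    L1Norm T (fun s => a * u s + b * v s) ≤ a * L1Norm T u + b * L1Norm T v := by
  unfold L1Norm
  rw [← integral_const_mul, ← integral_const_mul,
    ← integral_add ((intg_s7 hu hbu).abs.const_mul a) ((intg_s7 hv hbv).abs.const_mul b)]
  apply integral_mono
  · exact (intg_s7 (by fun_prop) (magBdd_comb hbu hbv ha hb hab)).abs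
  · exact ((intg_s7 hu hbu).abs.const_mul a).add ((intg_s7 hv hbv).abs.const_mul b)
  · intro s
    refine (abs_add_le _ _).trans ?_
    simp [abs_mul, abs_of_nonneg ha, abs_of_nonneg hb]

lemma reach_convex (n : ℕ) (T : ℝ) (A : Matrix (Fin n) (Fin n) ℝ) (B : Fin n → ℝ) :
    Convex ℝ (Reach n T A B) := by
  rintro x ⟨u, hu, hbu, rfl⟩ y ⟨v, hv, hbv, rfl⟩ a b ha hb hab
  exact ⟨_, by fun_prop, magBdd_comb hbu hbv ha hb hab, (stateInt_comb A B hu hbu hv hbv a b).symm⟩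

lemma magBdd_neg {T : ℝ} {u : ℝ → ℝ} (hu : MagBdd T u) : MagBdd T (fun s => - u s) := by
  intro t ht
  simpa using hu t ht

lemma stateInt_neg (n : ℕ) (T : ℝ) (A : Matrix (Fin n) (Fin n) ℝ) (B : Fin n → ℝ) (u : ℝ → ℝ) :
    stateInt n T A B (fun s => - u s) = - stateInt n T A B u := by
  unfold stateInt
  simp [integral_neg]

lemma L1_nonneg (T : ℝ) (u : ℝ → ℝ) : 0 ≤ L1Norm T u :=
  integral_nonneg fun _ => abs_nonneg _

lemma L1_le {T : ℝ} (hT : 0 < T) {u : ℝ → ℝ} (hu : Measurable u) (hb : MagBdd T u) :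
    L1Norm T u ≤ T := by
  have : ∫ t in Icc (0:ℝ) T, |u t| ≤ ∫ t in Icc (0:ℝ) T, (1:ℝ) :=
    setIntegral_mono_on (intg_s7 hu hb).abs (by simp) measurableSet_Icc hb
  simpa [L1Norm, hT.le] using this

lemma V1_le {n : ℕ} {T : ℝ} {A : Matrix (Fin n) (Fin n) ℝ} {B : Fin n → ℝ} {ξ : Fin n → ℝ}
    {u : ℝ → ℝ} (hu : Admissible n T A B ξ u) : V1 n T A B ξ ≤ L1Norm T u := by
  apply csInf_le
  · refine ⟨0, ?_⟩
    rintro c ⟨v, _, rfl⟩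
    exact L1_nonneg T v
  · exact ⟨u, hu, rfl⟩

lemma exists_adm {n : ℕ} {T : ℝ} {A : Matrix (Fin n) (Fin n) ℝ} {B : Fin n → ℝ} {ξ : Fin n → ℝ}
    (h : ξ ∈ Reach n T A B) : ∃ u, Admissible n T A B ξ u := by
  obtain ⟨u, hu, hb, rfl⟩ := h
  exact ⟨_, hu.neg, magBdd_neg hb, stateInt_neg n T A B u⟩

lemma exists_lt {n : ℕ} {T : ℝ} {A : Matrix (Fin n) (Fin n) ℝ} {B : Fin n → ℝ} {ξ : Fin n → ℝ}
    (h : ξ ∈ Reach n T A B) {ε : ℝ} (hε : 0 < ε) :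
    ∃ u, Admissible n T A B ξ u ∧ L1Norm T u < V1 n T A B ξ + ε := by
  obtain ⟨u, hu⟩ := exists_adm h
  obtain ⟨c, ⟨v, hv, rfl⟩, hc⟩ := Real.lt_sInf_add_pos
    (s := {c | ∃ u, Admissible n T A B ξ u ∧ c = L1Norm T u}) ⟨_, u, hu, rfl⟩ hε
  exact ⟨v, hv, hc⟩

lemma V1_convex (n : ℕ) (T : ℝ) (A : Matrix (Fin n) (Fin n) ℝ) (B : Fin n → ℝ) :
    ConvexOn ℝ (Reach n T A B) (V1 n T A B) := by
  refine ⟨reach_convex n T A B, ?_⟩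
  intro x hx y hy a b ha hb hab
  apply le_of_forall_pos_le_add
  intro ε hε
  obtain ⟨u, ⟨hu, hbu, hxu⟩, hlu⟩ := exists_lt hx hε
  obtain ⟨v, ⟨hv, hbv, hyv⟩, hlv⟩ := exists_lt hy hε
  have hadm : Admissible n T A B (a • x + b • y) (fun s => a * u s + b * v s) := by
    refine ⟨by fun_prop, magBdd_comb hbu hbv ha hb hab, ?_⟩
    rw [stateInt_comb A B hu hbu hv hbv, hxu, hyv]
    simp only [smul_neg, neg_add]
  have h1 := V1_le hadm
  have h2 := L1_comb hu hbu hv hbv ha hb hab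
  simp only [smul_eq_mul]
  nlinarith

lemma exists_support {n : ℕ} {s : Set (Fin n → ℝ)} (hs : Convex ℝ s) (h0 : (0 : Fin n → ℝ) ∈ s)
    {x : Fin n → ℝ} (hxs : x ∈ s) (hx : x ∉ interior s) :
    ∃ p : StrongDual ℝ (Fin n → ℝ), p ≠ 0 ∧ ∀ a ∈ s, p a ≤ p x := by
  by_cases hne : (interior s).Nonempty
  · exact geometric_hahn_banach_of_nonempty_interior_point hs hx hne
  · rw [hs.interior_nonempty_iff_affineSpan_eq_top] at hne
    have hlt : Submodule.span ℝ s < ⊤ := by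
      rw [lt_top_iff_ne_top]
      intro htop
      apply hne
      rw [AffineSubspace.affineSpan_eq_top_iff_vectorSpan_eq_top_of_nonempty ℝ _ _ ⟨0, h0⟩]
      rw [vectorSpan_eq_span_vsub_set_right ℝ h0]
      simpa using htop
    obtain ⟨f, hf, hm⟩ := Submodule.exists_dual_map_eq_bot_of_lt_top hlt inferInstance
    have hz : ∀ a ∈ s, f a = 0 := by
      intro a ha
      have : f a ∈ (Submodule.span ℝ s).map f := ⟨a, Submodule.subset_span ha, rfl⟩
      rw [hm] at this
      simpa using this
    refine ⟨LinearMap.toContinuousLinearMap f, ?_, ?_⟩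
    · intro h
      apply hf
      ext1 i
      ext
      exact congrArg (fun q : StrongDual ℝ (Fin n → ℝ) => q (Pi.single i 1)) h
    · intro a ha
      change f a ≤ f x
      rw [hz a ha, hz x hxs]

lemma quant {T : ℝ} (hT : 0 < T) {f : ℝ → ℝ} (hf : Continuous f)
    (hne : ∀ᵐ s ∂(volume.restrict (Icc (0:ℝ) T)), f s ≠ 0) {ε : ℝ} (hε : 0 < ε) :
    ∃ δ > 0, ∀ u : ℝ → ℝ, Measurable u → MagBdd T u →
      (∫ s in Icc (0:ℝ) T, (1 - |u s|) * |f s|) ≤ δ → T - L1Norm T u < ε := by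
  have hlim : Filter.Tendsto (fun k : ℕ => ∫ s in Icc (0:ℝ) T, max 0 (1 - (k:ℝ) * |f s|))
      Filter.atTop (nhds (∫ s in Icc (0:ℝ) T, (0:ℝ))) := by
    apply tendsto_integral_of_dominated_convergence (fun _ => (1:ℝ))
    · intro k
      exact (by fun_prop : Continuous fun s => max 0 (1 - (k:ℝ) * |f s|)).aestronglyMeasurable
    · simp
    · intro k
      refine Filter.Eventually.of_forall fun s => ?_
      rw [Real.norm_eq_abs, abs_of_nonneg (le_max_left _ _)]
      apply max_le zero_le_one
      have : 0 ≤ (k:ℝ) * |f s| := by positivity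
      linarith
    · filter_upwards [hne] with s hs
      have hpos : 0 < |f s| := abs_pos.2 hs
      obtain ⟨N, hN⟩ := exists_nat_gt (1 / |f s|)
      apply tendsto_const_nhds.congr'
      filter_upwards [Filter.eventually_ge_atTop N] with k hk
      symm
      apply max_eq_left
      have h1 : (N:ℝ) ≤ k := by exact_mod_cast hk
      have h2 : 1 < (k:ℝ) * |f s| := by
        rw [div_lt_iff₀ hpos] at hN
        nlinarith
      linarith
  rw [integral_zero] at hlim
  obtain ⟨k, hk⟩ := (hlim.eventually (gt_mem_nhds (half_pos hε))).exists
  refine ⟨ε / (2 * ((k:ℝ) + 1)), by positivity, ?_⟩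
  intro u hu hb hint
  have hbm : MagBdd T (fun s => 1 - |u s|) := by
    intro t ht
    have := hb t ht
    have h0 := abs_nonneg (u t)
    rw [abs_le]
    constructor <;> linarith
  have hmm : Measurable (fun s => 1 - |u s|) := by fun_prop
  have hI1 := intg_s7 hmm hbm
  have hI2 := intg_mul hmm hbm hf.abs
  have hI3 : IntegrableOn (fun s => max 0 (1 - (k:ℝ) * |f s|)) (Icc 0 T) :=
    (by fun_prop : Continuous fun s => max 0 (1 - (k:ℝ) * |f s|)).continuousOn.integrableOn_Icc
  have hT' : T - L1Norm T u = ∫ s in Icc (0:ℝ) T, (1 - |u s|) := by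
    rw [integral_sub (by simp) (intg_s7 hu hb).abs]
    simp [L1Norm, hT.le]
  have hle : (∫ s in Icc (0:ℝ) T, (1 - |u s|)) ≤
      ∫ s in Icc (0:ℝ) T, ((k:ℝ) * ((1 - |u s|) * |f s|) + max 0 (1 - (k:ℝ) * |f s|)) := by
    apply setIntegral_mono_on hI1 ((hI2.const_mul (k:ℝ)).add hI3) measurableSet_Icc
    intro s hs
    have h1 := hb s hs
    have h0 := abs_nonneg (u s)
    have h2 := le_max_left 0 (1 - (k:ℝ) * |f s|)
    have h3 := le_max_right 0 (1 - (k:ℝ) * |f s|)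
    change 1 - |u s| ≤ (k:ℝ) * ((1 - |u s|) * |f s|) + max 0 (1 - (k:ℝ) * |f s|)
    nlinarith [mul_le_mul_of_nonneg_left h3 (sub_nonneg.2 h1), mul_nonneg h0 h2]
  rw [integral_add (hI2.const_mul (k:ℝ)) hI3, integral_const_mul] at hle
  have h5 : (k:ℝ) * (∫ s in Icc (0:ℝ) T, (1 - |u s|) * |f s|) ≤ ε / 2 := by
    calc _ ≤ (k:ℝ) * (ε / (2 * ((k:ℝ) + 1))) := by gcongr
      _ ≤ ((k:ℝ) + 1) * (ε / (2 * ((k:ℝ) + 1))) := by gcongr; linarith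
      _ = ε / 2 := by field_simp
  linarith

/-- Controls reaching nearly the support value have `|u|` nearly one. -/
lemma near_support {n : ℕ} {T : ℝ} {A : Matrix (Fin n) (Fin n) ℝ} {B : Fin n → ℝ}
    {x y : Fin n → ℝ} {p : StrongDual ℝ (Fin n → ℝ)} (hp : ∀ a ∈ Reach n T A B, p a ≤ p x)
    {u : ℝ → ℝ} (hu : Admissible n T A B y u) :
    (∫ s in Icc (0:ℝ) T, (1 - |u s|) * |p (ker_g A B s)|) ≤ p x - p y := by
  obtain ⟨hm, hb, hy⟩ := hu
  have hf : Continuous fun s => p (ker_g A B s) := p.continuous.comp (continuous_ker_g A B)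
  set f : ℝ → ℝ := fun s => p (ker_g A B s) with hfdef
  have hsm : Measurable fun s => ((SignType.sign (f s) : SignType) : ℝ) := by
    have : (fun s => ((SignType.sign (f s) : SignType) : ℝ)) =
        fun s => if 0 < f s then 1 else if f s < 0 then -1 else 0 := by
      funext s
      rw [sign_apply]
      split_ifs <;> simp
    rw [this]
    exact Measurable.ite (measurableSet_lt measurable_const hf.measurable) measurable_const
      (Measurable.ite (measurableSet_lt hf.measurable measurable_const) measurable_const
        measurable_const)
  have hsb : MagBdd T fun s => ((SignType.sign (f s) : SignType) : ℝ) := by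
    intro t _
    change |((SignType.sign (f t) : SignType) : ℝ)| ≤ 1
    generalize SignType.sign (f t) = σ
    cases σ <;> simp
  have h1 := hp _ ⟨_, hsm, hsb, rfl⟩
  rw [p_stateInt A B hsm hsb] at h1
  have h2 : p y = - ∫ s in Icc (0:ℝ) T, u s * f s := by
    rw [← p_stateInt A B hm hb, hy]; simp
  have h3 : (∫ s in Icc (0:ℝ) T, ((SignType.sign (f s) : SignType) : ℝ) * p (ker_g A B s)) =
      ∫ s in Icc (0:ℝ) T, |f s| := by
    congr 1; funext s; exact sign_mul_self (f s)
  rw [h3] at h1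
  have hI1 : IntegrableOn (fun s => |f s|) (Icc 0 T) := hf.abs.continuousOn.integrableOn_Icc
  have hI2 := intg_mul hm hb hf
  have hbm : MagBdd T (fun s => 1 - |u s|) := by
    intro t ht
    have := hb t ht
    have h0 := abs_nonneg (u t)
    rw [abs_le]
    constructor <;> linarith
  have hI3 := intg_mul (by fun_prop : Measurable fun s => 1 - |u s|) hbm hf.abs
  have h4 : (∫ s in Icc (0:ℝ) T, (1 - |u s|) * |f s|) ≤
      ∫ s in Icc (0:ℝ) T, (|f s| + u s * f s) := by
    apply integral_mono hI3 (hI1.add hI2)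
    intro s
    have := neg_abs_le (u s * f s)
    rw [abs_mul] at this
    simp only [Pi.add_apply]
    linarith
  rw [integral_add hI1 hI2] at h4
  linarith

theorem L1_value_function_continuousOn (n : ℕ) (T : ℝ) (hT : 0 < T)
    (A : Matrix (Fin n) (Fin n) ℝ) (B : Fin n → ℝ)
    (hctrb : (ctrbMatrix n A B).rank = n) (hA : A.det ≠ 0) :
    ContinuousOn (V1 n T A B) (Reach n T A B) := by
  intro x hx
  by_cases hxi : x ∈ interior (Reach n T A B)
  · exact ((V1_convex n T A B).continuousOn_interior.continuousAt
      (isOpen_interior.mem_nhds hxi)).continuousWithinAt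
  have h0 : (0 : Fin n → ℝ) ∈ Reach n T A B := by
    refine ⟨fun _ => 0, measurable_const, fun t _ => by simp, ?_⟩
    simp [stateInt]
  obtain ⟨p, hp0, hp⟩ := exists_support (reach_convex n T A B) h0 hx hxi
  have hf : Continuous fun s => p (ker_g A B s) := p.continuous.comp (continuous_ker_g A B)
  have key : ∀ ε > 0, ∃ δ > 0, ∀ y ∈ Reach n T A B, p x - p y ≤ δ →
      T - ε ≤ V1 n T A B y ∧ V1 n T A B y ≤ T := by
    intro ε hε
    obtain ⟨δ, hδ, h⟩ := quant hT hf (ae_ne T A B hctrb p hp0) hε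
    refine ⟨δ, hδ, fun y hy hxy => ⟨?_, ?_⟩⟩
    · obtain ⟨u, hu⟩ := exists_adm hy
      refine le_csInf (s := {c | ∃ u, Admissible n T A B y u ∧ c = L1Norm T u})
        ⟨_, u, hu, rfl⟩ ?_
      rintro c ⟨v, hv, rfl⟩
      have := h v hv.1 hv.2.1 ((near_support hp hv).trans hxy)
      linarith
    · obtain ⟨u, hu⟩ := exists_adm hy
      exact (V1_le hu).trans (L1_le hT hu.1 hu.2.1)
  have hVx : V1 n T A B x = T := by
    apply le_antisymm
    · obtain ⟨δ, hδ, h⟩ := key 1 one_pos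
      exact (h x hx (by simpa using hδ.le)).2
    · apply le_of_forall_pos_le_add
      intro ε hε
      obtain ⟨δ, hδ, h⟩ := key ε hε
      have := (h x hx (by simpa using hδ.le)).1
      linarith
  rw [ContinuousWithinAt, hVx, Metric.tendsto_nhds]
  intro ε hε
  obtain ⟨δ, hδ, h⟩ := key (ε / 2) (half_pos hε)
  have hev : ∀ᶠ y in nhdsWithin x (Reach n T A B), p x - δ < p y :=
    (p.continuous.continuousAt.eventually (lt_mem_nhds (by linarith))).filter_mono
      nhdsWithin_le_nhds
  filter_upwards [hev, self_mem_nhdsWithin] with y hy1 hy2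
  obtain ⟨h1, h2⟩ := h y hy2 (by linarith)
  rw [Real.dist_eq, abs_lt]
  constructor <;> linarith
end
end
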